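/- arXiv:0808.2593 — 4 statements merged into one kernel-verified Lean document; each statement's English description precedes it below -/
import Mathlib

section
/- Define Q : G → G by (Q ψ) n = (((1 + n : ℝ) ^ (-(1:ℝ)/2) : ℝ) : ℂ) • ψ n. Then: (i) Q is a well-defined injective linear map; (ii) the range of Q is exactly D := { φ ∈ G : Σ' n, (1 + n) · ‖φ n‖² < ∞ }; and (iii) for all ψ, φ ∈ G, Σ' n, ((1 + n : ℝ) : ℂ) * ⟪(Q ψ) n, (Q φ) n⟫ = ⟪ψ, φ⟫. Consequently Q is a unitary isomorphism from G onto the space D equipped with the inner product ⟪φ, χ⟫₁ := Σ' n, ((1 + n : ℝ) : ℂ) * ⟪φ n, χ n⟫. (This is Theorem 3.3 of the paper, the L²-equivalence of norms: Q = (1+N)^{-1/2} is a unitary isomorphism between Γ(H) and Dom(∇⁻) with its graph inner product ⟨ψ₁,ψ₂⟩₁ = ⟨ψ₁,ψ₂⟩ + ⟨∇⁻ψ₁, ∇⁻ψ₂⟩, since ‖∇⁻ψ‖² = Σ' n, n‖ψ n‖².) -/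
open scoped ENNReal ComplexInnerProductSpace

/-!
With `w n = (1 + n) ^ (-1/2)` one has `0 < w n ≤ 1` and `(1 + n) * w n ^ 2 = 1`. The bound makes
blockwise multiplication by `w` a map of the Hilbert sum into itself, positivity makes it injective,
and the identity turns `∑ (1 + n) ‖w n • ψ n‖²` into `∑ ‖ψ n‖²` (and likewise for inner products).
Hence the image lies in the weighted domain. Conversely, dividing an element `φ` of that domain
blockwise by `w` yields a sequence `ψ` with `∑ ‖ψ n‖² = ∑ (1 + n) ‖φ n‖² < ∞`
(`enorm_sq_eq_of_eq_smul`), so `ψ` is square summable (`memlp_two_iff_tsum_lt_top`) and is a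
preimage of `φ`.
-/

/-- The scalar by which `(1 + N) ^ (-1/2)` acts on the `n`-th block. -/
noncomputable def numberWeight (n : ℕ) : ℝ := (1 + n : ℝ) ^ (-(1 : ℝ) / 2)

lemma numberWeight_pos (n : ℕ) : 0 < numberWeight n := by
  unfold numberWeight; positivity

lemma numberWeight_le_one (n : ℕ) : numberWeight n ≤ 1 :=
  Real.rpow_le_one_of_one_le_of_nonpos (by simp) (by norm_num)

lemma one_add_mul_numberWeight_sq (n : ℕ) : (1 + n : ℝ) * numberWeight n ^ 2 = 1 := by
  have h : (0 : ℝ) < 1 + n := by positivity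
  rw [numberWeight, ← Real.rpow_natCast, ← Real.rpow_mul h.le]
  norm_num [Real.rpow_neg_one, h.ne']

/-- Square summability phrased through an extended nonnegative sum, which needs no separate
convergence hypothesis. -/
lemma memlp_two_iff_tsum_lt_top {H : ℕ → Type*} [∀ n, NormedAddCommGroup (H n)]
    (f : ∀ n, H n) : Memℓp f 2 ↔ (∑' n, (‖f n‖₊ : ℝ≥0∞) ^ 2) < ⊤ := by
  rw [memℓp_gen_iff (by norm_num), lt_top_iff_ne_top]
  have h : ∀ n, (‖f n‖₊ : ℝ≥0∞) ^ 2 = ((‖f n‖₊ ^ 2 : NNReal) : ℝ≥0∞) := fun n => by push_cast; rfl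
  simp_rw [h, ENNReal.tsum_coe_ne_top_iff_summable, ← NNReal.summable_coe]
  simp

/-- The weight `1 + n` exactly compensates the factor `(1 + n) ^ (-1/2)` in the squared norm. -/
lemma enorm_sq_eq_of_eq_smul {E : Type*} [NormedAddCommGroup E] [InnerProductSpace ℂ E]
    (n : ℕ) {x y : E} (h : y = (numberWeight n : ℂ) • x) :
    ((1 : ℝ≥0∞) + n) * (‖y‖₊ : ℝ≥0∞) ^ 2 = (‖x‖₊ : ℝ≥0∞) ^ 2 := by
  have key : (1 + n : NNReal) * ‖y‖₊ ^ 2 = ‖x‖₊ ^ 2 := by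
    apply NNReal.coe_injective
    push_cast
    rw [h, norm_smul, Complex.norm_real, Real.norm_of_nonneg (numberWeight_pos n).le, mul_pow,
      ← mul_assoc, one_add_mul_numberWeight_sq, one_mul]
  exact_mod_cast congrArg (fun r : NNReal => (r : ℝ≥0∞)) key

lemma memlp_numberWeight_smul {H : ℕ → Type*} [∀ n, NormedAddCommGroup (H n)]
    [∀ n, InnerProductSpace ℂ (H n)] (ψ : lp H 2) :
    Memℓp (fun n => (numberWeight n : ℂ) • ψ n) 2 := by
  refine (memlp_two_iff_tsum_lt_top _).2 (lt_of_le_of_lt (ENNReal.tsum_le_tsum fun n => ?_)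
    ((memlp_two_iff_tsum_lt_top _).1 (lp.memℓp ψ)))
  gcongr
  rw [← NNReal.coe_le_coe, coe_nnnorm, coe_nnnorm, norm_smul, Complex.norm_real,
    Real.norm_of_nonneg (numberWeight_pos n).le]
  exact mul_le_of_le_one_left (norm_nonneg _) (numberWeight_le_one n)

/-- The operator `(1 + N) ^ (-1/2)` on the Hilbert direct sum, acting blockwise by the scalars
`numberWeight n`. -/
noncomputable def invSqrtOneAddNumber (H : ℕ → Type*) [∀ n, NormedAddCommGroup (H n)]
    [∀ n, InnerProductSpace ℂ (H n)] : lp H 2 →ₗ[ℂ] lp H 2 where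
  toFun ψ := ⟨fun n => (numberWeight n : ℂ) • ψ n, memlp_numberWeight_smul ψ⟩
  map_add' ψ φ := by
    ext n
    exact smul_add _ _ _
  map_smul' c ψ := by
    ext n
    exact smul_comm _ _ _

lemma invSqrtOneAddNumber_apply {H : ℕ → Type*} [∀ n, NormedAddCommGroup (H n)]
    [∀ n, InnerProductSpace ℂ (H n)] (ψ : lp H 2) (n : ℕ) :
    (invSqrtOneAddNumber H ψ : ∀ m, H m) n = (numberWeight n : ℂ) • ψ n := rfl

/-- **Theorem 3.3 (L²-equivalence of norms).** The operator `Q = (1+N)^{-1/2}`, acting blockwise by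
`(Q ψ) n = (1+n)^{-1/2} • ψ n`, is a well-defined injective linear map on the Hilbert direct sum
`G = ⊕ₙ H n`, its range is exactly `D = {φ : ∑' n, (1+n) ‖φ n‖² < ∞}` (the domain of `∇⁻` = the
domain of `√N`), and it carries the inner product of `G` to the graph inner product
`⟪φ, χ⟫₁ = ∑' n, (1+n) ⟪φ n, χ n⟫` on `D`; hence `Q : G → (D, ⟪·,·⟫₁)` is a unitary
isomorphism. -/
theorem Q_unitary_onto_domain_graph_inner
    {H : ℕ → Type*} [∀ n, NormedAddCommGroup (H n)] [∀ n, InnerProductSpace ℂ (H n)]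
    [∀ n, CompleteSpace (H n)] :
    ∃ Q : lp H 2 →ₗ[ℂ] lp H 2,
      (∀ ψ : lp H 2, ∀ n : ℕ,
        (Q ψ : ∀ m, H m) n = ((((1 + n : ℝ) ^ (-(1 : ℝ) / 2) : ℝ)) : ℂ) • ψ n) ∧
      Function.Injective Q ∧
      (Set.range Q =
        {φ : lp H 2 | (∑' n : ℕ, ((1 : ℝ≥0∞) + n) * (‖φ n‖₊ : ℝ≥0∞) ^ 2) < ⊤}) ∧
      (∀ ψ φ : lp H 2,
        (∑' n : ℕ, ((1 + n : ℝ) : ℂ) * ⟪(Q ψ : ∀ m, H m) n, (Q φ : ∀ m, H m) n⟫)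
          = ⟪ψ, φ⟫) := by
  have hw : ∀ n, (numberWeight n : ℂ) ≠ 0 := fun n =>
    Complex.ofReal_ne_zero.2 (numberWeight_pos n).ne'
  refine ⟨invSqrtOneAddNumber H, fun ψ n => invSqrtOneAddNumber_apply ψ n, fun ψ φ h => ?_, ?_,
    fun ψ φ => ?_⟩
  · ext n
    have hn := congrArg (fun χ : lp H 2 => (χ : ∀ m, H m) n) h
    exact smul_right_injective (H n) (hw n) hn
  · ext φ
    constructor
    · rintro ⟨ψ, rfl⟩
      refine lt_of_eq_of_lt (tsum_congr fun n => ?_)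
        ((memlp_two_iff_tsum_lt_top _).1 (lp.memℓp ψ))
      exact enorm_sq_eq_of_eq_smul n (invSqrtOneAddNumber_apply ψ n)
    · intro hφ
      have hs : ∀ n, φ n = (numberWeight n : ℂ) • ((numberWeight n : ℂ)⁻¹ • φ n) := fun n =>
        (smul_inv_smul₀ (hw n) _).symm
      have hm : Memℓp (fun n => (numberWeight n : ℂ)⁻¹ • φ n) 2 :=
        (memlp_two_iff_tsum_lt_top _).2
          (lt_of_eq_of_lt (tsum_congr fun n => (enorm_sq_eq_of_eq_smul n (hs n)).symm) hφ)
      refine ⟨⟨_, hm⟩, ?_⟩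
      ext n
      exact (hs n).symm
  · rw [lp.inner_eq_tsum]
    refine tsum_congr fun n => ?_
    have hc : ((1 + n : ℝ) : ℂ) * (numberWeight n : ℂ) ^ 2 = 1 := by
      exact_mod_cast one_add_mul_numberWeight_sq n
    rw [invSqrtOneAddNumber_apply, invSqrtOneAddNumber_apply, inner_smul_left, inner_smul_right,
      Complex.conj_ofReal]
    linear_combination ⟪ψ n, φ n⟫ * hc
end

section
/- Let E be a complex inner product space, let f₁, g₁, f₂, g₂ ∈ E and let n ≥ 1. Then Σ_{r=0}^{n} Σ_{s=0}^{n} ∏_{k=0}^{n} ⟪(if k = r then g₁ else f₁), (if k = s then g₂ else f₂)⟫ = (n+1) · ⟪f₁, f₂⟫^n · ⟪g₁, g₂⟫ + n·(n+1) · ⟪f₁, f₂⟫^(n-1) · ⟪g₁, f₂⟫ · ⟪f₁, g₂⟫. (This is the computational core of Theorem 3.4 of the paper, the abstract Itô–Skorohod isometry (3.18): after multiplication by n!/(n+1) it expresses ⟨∇ₙ⁺(f₁^{⊙n} ⊗ g₁), ∇ₙ⁺(f₂^{⊙n} ⊗ g₂)⟩ = ⟨f₁^{⊙n} ⊗ g₁,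 f₂^{⊙n} ⊗ g₂⟩ + ⟨(I ⊗ τ)(∇ₙ⁻ ⊗ I)(f₁^{⊙n} ⊗ g₁), (∇ₙ⁻ ⊗ I)(f₂^{⊙n} ⊗ g₂)⟩.) -/
/-! The factorwise inner product depends only on whether the slots `r` and `s` of `g₁` and `g₂`
coincide. If `r = s`, the two distinguished vectors meet and the product is
`⟪f₁,f₂⟫ⁿ ⟪g₁,g₂⟫`; if `r ≠ s`, each meets an `f` and the product is
`⟪f₁,f₂⟫ⁿ⁻¹ ⟪g₁,f₂⟫ ⟪f₁,g₂⟫` (`prod_inner_slots`). Among the `(n+1)²` pairs `(r, s)`,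
`n+1` are diagonal and `n(n+1)` are not, which gives the two coefficients. -/

open scoped ComplexInnerProductSpace

lemma prod_inner_slots {E : Type*} [NormedAddCommGroup E] [InnerProductSpace ℂ E]
    (f₁ g₁ f₂ g₂ : E) (n : ℕ) {r s : ℕ}
    (hr : r ∈ Finset.range (n + 1)) (hs : s ∈ Finset.range (n + 1)) :
    ∏ k ∈ Finset.range (n + 1), ⟪(if k = r then g₁ else f₁), (if k = s then g₂ else f₂)⟫
      = if s = r then ⟪f₁, f₂⟫ ^ n * ⟪g₁, g₂⟫
        else ⟪f₁, f₂⟫ ^ (n - 1) * ⟪g₁, f₂⟫ * ⟪f₁, g₂⟫ := by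
  rw [← Finset.mul_prod_erase _ _ hr]
  by_cases h : s = r
  · subst h
    have hconst : ∀ k ∈ (Finset.range (n + 1)).erase s,
        ⟪(if k = s then g₁ else f₁), (if k = s then g₂ else f₂)⟫ = ⟪f₁, f₂⟫ := by
      intro k hk
      simp [Finset.ne_of_mem_erase hk]
    rw [Finset.prod_congr rfl hconst, Finset.prod_const, Finset.card_erase_of_mem hs]
    simp [mul_comm]
  · have hs' : s ∈ (Finset.range (n + 1)).erase r := Finset.mem_erase.2 ⟨h, hs⟩
    have hconst : ∀ k ∈ ((Finset.range (n + 1)).erase r).erase s,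
        ⟪(if k = r then g₁ else f₁), (if k = s then g₂ else f₂)⟫ = ⟪f₁, f₂⟫ := by
      intro k hk
      simp [Finset.ne_of_mem_erase hk, Finset.ne_of_mem_erase (Finset.mem_of_mem_erase hk)]
    rw [← Finset.mul_prod_erase _ _ hs', Finset.prod_congr rfl hconst, Finset.prod_const,
      Finset.card_erase_of_mem hs', Finset.card_erase_of_mem hr]
    simp only [if_true, if_neg h, if_neg (Ne.symm h), Finset.card_range, Nat.add_sub_cancel]
    ring

/-- **Theorem 3.4, computational core (abstract Itô–Skorohod isometry, (3.18)).** For vectors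
`f₁, g₁, f₂, g₂` in a complex inner product space and `n ≥ 1`, the double sum of the factorwise
inner products of the elementary tensors `f₁^{⊗(n-r)} ⊗ g₁ ⊗ f₁^{⊗r}` and
`f₂^{⊗(n-s)} ⊗ g₂ ⊗ f₂^{⊗s}` equals
`(n+1) ⟪f₁,f₂⟫ⁿ ⟪g₁,g₂⟫ + n(n+1) ⟪f₁,f₂⟫^{n-1} ⟪g₁,f₂⟫ ⟪f₁,g₂⟫`. -/
theorem ito_skorohod_core
    {E : Type*} [NormedAddCommGroup E] [InnerProductSpace ℂ E]
    (f₁ g₁ f₂ g₂ : E) (n : ℕ) (hn : 1 ≤ n) :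
    ∑ r ∈ Finset.range (n + 1), ∑ s ∈ Finset.range (n + 1),
        ∏ k ∈ Finset.range (n + 1),
          ⟪(if k = r then g₁ else f₁), (if k = s then g₂ else f₂)⟫
      = (n + 1 : ℂ) * ⟪f₁, f₂⟫ ^ n * ⟪g₁, g₂⟫
        + (n : ℂ) * (n + 1 : ℂ) * ⟪f₁, f₂⟫ ^ (n - 1) * ⟪g₁, f₂⟫ * ⟪f₁, g₂⟫ := by
  have hrow : ∀ r ∈ Finset.range (n + 1),
      ∑ s ∈ Finset.range (n + 1), ∏ k ∈ Finset.range (n + 1),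
          ⟪(if k = r then g₁ else f₁), (if k = s then g₂ else f₂)⟫
        = ⟪f₁, f₂⟫ ^ n * ⟪g₁, g₂⟫
          + (n : ℂ) * (⟪f₁, f₂⟫ ^ (n - 1) * ⟪g₁, f₂⟫ * ⟪f₁, g₂⟫) := by
    intro r hr
    have hoff : ∀ s ∈ (Finset.range (n + 1)).erase r,
        (if s = r then ⟪f₁, f₂⟫ ^ n * ⟪g₁, g₂⟫
          else ⟪f₁, f₂⟫ ^ (n - 1) * ⟪g₁, f₂⟫ * ⟪f₁, g₂⟫)
        = ⟪f₁, f₂⟫ ^ (n - 1) * ⟪g₁, f₂⟫ * ⟪f₁, g₂⟫ :=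
      fun s hs => if_neg (Finset.ne_of_mem_erase hs)
    rw [Finset.sum_congr rfl fun s hs => prod_inner_slots f₁ g₁ f₂ g₂ n hr hs,
      ← Finset.add_sum_erase _ _ hr, Finset.sum_congr rfl hoff, Finset.sum_const,
      Finset.card_erase_of_mem hr, if_pos rfl, Finset.card_range, Nat.add_sub_cancel,
      nsmul_eq_mul]
  rw [Finset.sum_congr rfl hrow, Finset.sum_const, Finset.card_range, nsmul_eq_mul]
  push_cast
  ring
end

section
/- Let E be a complex inner product space, let f, g ∈ E and let n ≥ 1. Then Σ_{r=0}^{n} Σ_{s=0}^{n} ∏_{k=0}^{n} ⟪(if k = r then g else f), (if k = s then g else f)⟫ = (n+1) · ‖f‖^(2n) · ‖g‖² + n·(n+1) · ‖f‖^(2(n-1)) · ‖⟪f, g⟫‖² (a nonnegative real number, regarded as a complex number), and this quantity is at most (n+1)² · ‖f‖^(2n) · ‖g‖². (This is the computational core of Lemma 3.1 of the paper: the restriction ∇ₙ⁺ of the universal creation operator to H^{⊙n} ⊗ H is bounded with operator norm √(n+1), since ‖∇ₙ⁺(f^{⊙n} ⊗ g)‖² = (n!/(n+1)) times the displayed double sum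 ≤ (n+1) ‖f^{⊙n} ⊗ g‖².) -/
/-! The Gram matrix of the tensors `f^{⊗(n-r)} ⊗ g ⊗ f^{⊗r}` takes only two values. On the diagonal the
factor at `k = r` is `⟪g, g⟫` and the remaining `n` factors are `⟪f, f⟫`, giving `‖f‖^{2n} ‖g‖²`.
Off the diagonal the factors at `k = r` and `k = s` are `⟪g, f⟫` and `⟪f, g⟫`, giving
`‖f‖^{2(n-1)} |⟪f, g⟫|²`. There are `n + 1` diagonal and `n (n + 1)` off-diagonal entries, which is
the identity; the bound is the Cauchy–Schwarz inequality applied to each off-diagonal entry. -/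

open scoped ComplexInnerProductSpace

section Gram

variable {E : Type*} [NormedAddCommGroup E] [InnerProductSpace ℂ E]

theorem gram_diag (f g : E) (n r : ℕ) (hr : r ∈ Finset.range (n + 1)) :
    ∏ k ∈ Finset.range (n + 1), ⟪(if k = r then g else f), (if k = r then g else f)⟫
      = ((‖f‖ ^ (2 * n) * ‖g‖ ^ 2 : ℝ) : ℂ) := by
  rw [← Finset.prod_erase_mul _ _ hr, Finset.prod_congr rfl (g := fun _ => ⟪f, f⟫)]
  · simp only [Finset.prod_const, Finset.card_erase_of_mem hr, Finset.card_range, if_true,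
      Nat.add_sub_cancel, inner_self_eq_norm_sq_to_K]
    push_cast
    rw [pow_mul]
    rfl
  · intro k hk
    simp [Finset.ne_of_mem_erase hk]

theorem gram_off_diag (f g : E) (n r s : ℕ) (hr : r ∈ Finset.range (n + 1))
    (hs : s ∈ Finset.range (n + 1)) (hrs : s ≠ r) :
    ∏ k ∈ Finset.range (n + 1), ⟪(if k = r then g else f), (if k = s then g else f)⟫
      = ((‖f‖ ^ (2 * (n - 1)) * ‖⟪f, g⟫‖ ^ 2 : ℝ) : ℂ) := by
  have hs' : s ∈ (Finset.range (n + 1)).erase r := Finset.mem_erase.2 ⟨hrs, hs⟩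
  rw [← Finset.prod_erase_mul _ _ hr, ← Finset.prod_erase_mul _ _ hs',
    Finset.prod_congr rfl (g := fun _ => ⟪f, f⟫)]
  · have hgf : ⟪f, g⟫ * ⟪g, f⟫ = ((‖⟪f, g⟫‖ : ℝ) : ℂ) ^ 2 := by
      rw [← inner_conj_symm g f, Complex.mul_conj']
    simp only [Finset.prod_const, Finset.card_erase_of_mem hs', Finset.card_erase_of_mem hr,
      Finset.card_range, if_true, if_neg hrs, if_neg hrs.symm, Nat.add_sub_cancel,
      inner_self_eq_norm_sq_to_K]
    rw [mul_assoc, hgf]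
    push_cast
    rw [pow_mul]
    rfl
  · intro k hk
    simp [Finset.ne_of_mem_erase hk, Finset.ne_of_mem_erase (Finset.mem_of_mem_erase hk)]

end Gram

/-- **Lemma 3.1, computational core.** For `f, g` in a complex inner product space and `n ≥ 1`,
the double sum of factorwise inner products of the elementary tensors
`f^{⊗(n-r)} ⊗ g ⊗ f^{⊗r}` equals the nonnegative real number
`(n+1) ‖f‖^{2n} ‖g‖² + n(n+1) ‖f‖^{2(n-1)} |⟪f,g⟫|²` (regarded as a complex number), which is
at most `(n+1)² ‖f‖^{2n} ‖g‖²`; this gives `‖∇ₙ⁺‖ = √(n+1)`. -/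
theorem creation_norm_core
    {E : Type*} [NormedAddCommGroup E] [InnerProductSpace ℂ E]
    (f g : E) (n : ℕ) (hn : 1 ≤ n) :
    (∑ r ∈ Finset.range (n + 1), ∑ s ∈ Finset.range (n + 1),
        ∏ k ∈ Finset.range (n + 1),
          ⟪(if k = r then g else f), (if k = s then g else f)⟫
      = ((((n : ℝ) + 1) * ‖f‖ ^ (2 * n) * ‖g‖ ^ 2
        + (n : ℝ) * ((n : ℝ) + 1) * ‖f‖ ^ (2 * (n - 1)) * ‖⟪f, g⟫‖ ^ 2 : ℝ) : ℂ)) ∧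
    ((n : ℝ) + 1) * ‖f‖ ^ (2 * n) * ‖g‖ ^ 2
        + (n : ℝ) * ((n : ℝ) + 1) * ‖f‖ ^ (2 * (n - 1)) * ‖⟪f, g⟫‖ ^ 2
      ≤ ((n : ℝ) + 1) ^ 2 * ‖f‖ ^ (2 * n) * ‖g‖ ^ 2 := by
  constructor
  · have row : ∀ r ∈ Finset.range (n + 1),
        ∑ s ∈ Finset.range (n + 1), ∏ k ∈ Finset.range (n + 1),
          ⟪(if k = r then g else f), (if k = s then g else f)⟫
        = (n : ℂ) * ((‖f‖ ^ (2 * (n - 1)) * ‖⟪f, g⟫‖ ^ 2 : ℝ) : ℂ)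
          + ((‖f‖ ^ (2 * n) * ‖g‖ ^ 2 : ℝ) : ℂ) := by
      intro r hr
      rw [← Finset.sum_erase_add _ _ hr, gram_diag f g n r hr,
        Finset.sum_congr rfl fun s hs => gram_off_diag f g n r s hr
          (Finset.mem_of_mem_erase hs) (Finset.ne_of_mem_erase hs),
        Finset.sum_const, Finset.card_erase_of_mem hr, Finset.card_range, Nat.add_sub_cancel,
        nsmul_eq_mul]
    rw [Finset.sum_congr rfl row, Finset.sum_const, Finset.card_range, nsmul_eq_mul]
    push_cast
    ring
  · have hcs : ‖⟪f, g⟫‖ ^ 2 ≤ ‖f‖ ^ 2 * ‖g‖ ^ 2 := by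
      rw [← mul_pow]
      gcongr
      exact norm_inner_le_norm f g
    have hpow : ‖f‖ ^ (2 * n) = ‖f‖ ^ (2 * (n - 1)) * ‖f‖ ^ 2 := by
      rw [← pow_add]
      congr 1
      omega
    calc _ ≤ ((n : ℝ) + 1) * ‖f‖ ^ (2 * n) * ‖g‖ ^ 2
          + (n : ℝ) * ((n : ℝ) + 1) * ‖f‖ ^ (2 * (n - 1)) * (‖f‖ ^ 2 * ‖g‖ ^ 2) := by gcongr
      _ = _ := by
        rw [hpow]
        ring
end

section
/- Define the number operator N as the LinearPMap from G to G with domain { ψ ∈ G : Σ' n, n² · ‖ψ n‖² < ∞ } and action (N ψ) n = (n : ℂ) • ψ n. Then N is densely defined and self-adjoint, i.e. its adjoint N† (in the sense of densely defined operators on a Hilbert space) equals N, with the same domain. (This makes precise the paper's number operator N = Λ(I), with Dom(N) = { (fₙ) ∈ Γ(H) : Σₙ n² ‖fₙ‖² < ∞ }, in the abstract direct-sum model of Fock space.) -/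
open scoped ENNReal

/-!
Vectors supported in a single summand lie in the domain of `N`, and their finite sums are dense
in the Hilbert sum, so `N` is densely defined. As the weights `n` are real, `N` is symmetric,
whence `N ≤ N†`. For the reverse inclusion of domains, let `ψ` be in the domain of `N†`. Testing
the identity `⟪N† ψ, φ⟫ = ⟪ψ, N φ⟫` against the vectors `φ` supported in the `n`-th summand gives
`(N† ψ) n = n • ψ n`. Since `N† ψ` is square summable, this is exactly the condition for `ψ` to
belong to the domain of `N`.
-/

/-- **The number operator is self-adjoint.** The partially defined operator `N` on the Hilbert
direct sum `G = ⊕ₙ H n` with domain `{ψ : ∑' n, n² ‖ψ n‖² < ∞}` and blockwise action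
`(N ψ) n = n • ψ n` is densely defined and equal to its own adjoint (the paper's number operator
`N = Λ(I)` in the abstract direct-sum model of Fock space). -/
theorem number_operator_selfAdjoint
    {H : ℕ → Type*} [∀ n, NormedAddCommGroup (H n)] [∀ n, InnerProductSpace ℂ (H n)]
    [∀ n, CompleteSpace (H n)]
    (N : lp H 2 →ₗ.[ℂ] lp H 2)
    (hdom : ∀ ψ : lp H 2, ψ ∈ N.domain ↔
      (∑' n : ℕ, (n : ℝ≥0∞) ^ 2 * (‖ψ n‖₊ : ℝ≥0∞) ^ 2) < ⊤)
    (hact : ∀ ψ : N.domain, ∀ n, (N ψ : ∀ m, H m) n = (n : ℂ) • (ψ : ∀ m, H m) n) :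
    Dense (N.domain : Set (lp H 2)) ∧ N.adjoint = N := by
  have hsingle : ∀ (n : ℕ) (a : H n), lp.single 2 n a ∈ N.domain := by
    intro n a
    rw [hdom, tsum_eq_single n]
    · exact ENNReal.mul_lt_top (by simp) (by simp)
    · intro m hm
      rw [lp.single_apply_ne 2 n a hm]
      simp
  have hdense : Dense (N.domain : Set (lp H 2)) := by
    intro ψ
    refine mem_closure_of_tendsto (lp.hasSum_single (by simp) ψ) (Filter.Eventually.of_forall ?_)
    exact fun s => N.domain.sum_mem fun n _ => hsingle n (ψ n)
  have hsymm : N.IsFormalAdjoint N := by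
    intro φ ψ
    rw [lp.inner_eq_tsum, lp.inner_eq_tsum]
    refine tsum_congr fun n => ?_
    rw [hact, hact, inner_smul_left, inner_smul_right]
    simp
  refine ⟨hdense, (LinearPMap.eq_of_le_of_domain_eq (hsymm.le_adjoint hdense) ?_).symm⟩
  refine le_antisymm (hsymm.le_adjoint hdense).1 fun ψ hψ => ?_
  set χ : lp H 2 := N.adjoint ⟨ψ, hψ⟩ with hχ
  have hcoord : ∀ n, χ n = (n : ℂ) • ψ n := by
    intro n
    refine ext_inner_right ℂ fun a => ?_
    have h := LinearPMap.adjoint_isFormalAdjoint hdense ⟨ψ, hψ⟩ ⟨_, hsingle n a⟩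
    have hN : N ⟨_, hsingle n a⟩ = (n : ℂ) • lp.single 2 n a := by
      ext m
      rw [hact]
      by_cases hm : m = n
      · subst hm
        simp
      · simp [Pi.single_eq_of_ne hm]
    rw [hN, inner_smul_right, ← hχ] at h
    simp only [lp.inner_single_right] at h
    rw [h, inner_smul_left]
    simp
  have hsum : Summable fun n => ‖χ n‖₊ ^ 2 := by
    rw [← NNReal.summable_coe]
    simpa using (lp.memℓp χ).summable (by simp)
  rw [hdom, lt_top_iff_ne_top]
  convert ENNReal.tsum_coe_ne_top_iff_summable.mpr hsum using 4 with n
  rw [hcoord, nnnorm_smul]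
  simp [mul_pow]
end
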